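/- For every n ≥ 1 and every degree vector a ∈ ℕ^n, the linear map ∂ = ∂_a on the free vector space F(n) spanned by planar rooted trees with n leaves squares to zero: ∂∘∂ = 0. -/

import Mathlib

/-- Planar rooted trees with leaves decorated by natural numbers (the degrees of
the decorations).  `node cs` has the list `cs` of ordered children. -/
inductive DTree : Type
  | leaf (a : ℕ) : DTree
  | node (children : List DTree) : DTree

namespace DTree

mutual
  /-- degree of a decorated tree: sum of the leaf decorations plus the number of
  vertices (leaves are not vertices, the root of a non-trivial tree is). -/
  def deg : DTree → ℕ
    | leaf a => a
    | node cs => 1 + degList cs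
  def degList : List DTree → ℕ
    | [] => 0
    | c :: rest => deg c + degList rest
end

/-- The weight `W_A` of the vertex at address `p` (list of child indices from the
root): the number of edges of the path `γ` from the root to `A` plus the sum of
the degrees of the subtrees hanging off the path to the left of it. -/
def weightAt : DTree → List ℕ → ℕ
  | _, [] => 0
  | leaf _, _ :: _ => 0
  | node cs, i :: p => 1 + ((cs.take i).map deg).sum + weightAt (cs.getD i (leaf 0)) p

/-- `∂_A t` : merge the vertex at address `p` into its parent (the vertex is
removed and its children are inserted, in order, at its position in the list of
children of its parent). -/
def contractAt : DTree → List ℕ → DTree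
  | t, [] => t
  | leaf a, _ :: _ => leaf a
  | node cs, [i] =>
      match cs.getD i (leaf 0) with
      | node ds => node (cs.take i ++ ds ++ cs.drop (i + 1))
      | leaf _ => node cs
  | node cs, i :: j :: p => node (cs.set i (contractAt (cs.getD i (leaf 0)) (j :: p)))

mutual
  /-- addresses of all vertices of a tree (the root, address `[]`, included when
  the tree is not a leaf; leaves are not vertices). -/
  def vertAddrs : DTree → List (List ℕ)
    | leaf _ => []
    | node cs => [] :: addrsAux cs 0
  def addrsAux : List DTree → ℕ → List (List ℕ)
    | [], _ => []
    | c :: rest, i => (vertAddrs c).map (fun p => i :: p) ++ addrsAux rest (i + 1)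
end

/-- addresses of the inner vertices: all vertices except the root. -/
def innerAddrs : DTree → List (List ℕ)
  | leaf _ => []
  | node cs => addrsAux cs 0

/-- well-formedness: every vertex has at least two children. -/
inductive Good : DTree → Prop
  | leaf (a : ℕ) : Good (leaf a)
  | node (cs : List DTree) : 2 ≤ cs.length → (∀ c ∈ cs, Good c) → Good (node cs)

end DTree

/-- The linear map `∂` on the free vector space on decorated planar rooted
trees, `∂ t = Σ_{A inner vertex of t} (−1)^{W_A} ∂_A t`. -/
noncomputable def treeDelta : (DTree →₀ ℚ) →ₗ[ℚ] (DTree →₀ ℚ) :=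
  Finsupp.lsum ℚ fun t => LinearMap.toSpanSingleton ℚ (DTree →₀ ℚ)
    (((DTree.innerAddrs t).map fun p =>
        ((-1 : ℚ) ^ DTree.weightAt t p) • Finsupp.single (DTree.contractAt t p) (1 : ℚ)).sum)

/-!
Work in the free algebra on trees, whose basis consists of the forests. Let `ε` multiply a forest by
the sign of its degree, and let `B` graft a forest onto a new root. The weights `W_A` are exactly
such that contracting vertices of a forest, with the contraction of the roots included, is an
`ε`-derivation `d` of this algebra with `∂ ∘ B = B ∘ d` and, on grafted forests,
`d ∘ B = -id - B ∘ d`. As `d` anticommutes with `ε`, its square is a derivation; it satisfies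
`d² ∘ B = B ∘ d²`, so it vanishes on all trees by induction, hence everywhere. Thus
`∂² ∘ B = B ∘ d² = 0`.
-/

theorem map_map_mul_of_skew_leibniz {A F : Type*} [NonUnitalNonAssocRing A] [FunLike F A A]
    [AddMonoidHomClass F A A] (d : F) (ε : A → A)
    (leibniz : ∀ a b, d (a * b) = d a * b + ε a * d b) (anticomm : ∀ a, d (ε a) = -ε (d a))
    (a b : A) : d (d (a * b)) = d (d a) * b + ε (ε a) * d (d b) := by
  simp only [leibniz, map_add, anticomm, neg_mul]
  abel

namespace DTree

@[elab_as_elim]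
theorem induction_on_children {P : DTree → Prop} (leaf : ∀ a, P (leaf a))
    (node : ∀ cs, (∀ c ∈ cs, P c) → P (node cs)) : ∀ t, P t
  | .leaf a => leaf a
  | .node cs => node cs fun c _ => induction_on_children leaf node c

theorem sum_map_deg (x : List DTree) : (x.map deg).sum = degList x := by
  induction x with
  | nil => rfl
  | cons c r ih => rw [List.map_cons, List.sum_cons, ih, degList]

theorem degList_append (x y : List DTree) : degList (x ++ y) = degList x + degList y := by
  simp only [← sum_map_deg, List.map_append, List.sum_append]

theorem weightAt_node_append_cons (pre r : List DTree) (c : DTree) (p : List ℕ) :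
    weightAt (node (pre ++ c :: r)) (pre.length :: p) = 1 + degList pre + weightAt c p := by
  simp [weightAt, sum_map_deg]

theorem contractAt_node_append_cons_root (pre ds r : List DTree) :
    contractAt (node (pre ++ node ds :: r)) [pre.length] = node (pre ++ ds ++ r) := by
  simp [contractAt]

theorem contractAt_node_append_cons (pre r : List DTree) (c : DTree) {p : List ℕ} (hp : p ≠ []) :
    contractAt (node (pre ++ c :: r)) (pre.length :: p) = node (pre ++ contractAt c p :: r) := by
  obtain ⟨j, q, rfl⟩ := List.exists_cons_of_ne_nil hp
  simp [contractAt]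

theorem ne_nil_of_mem_addrsAux {x : List DTree} {k : ℕ} {p : List ℕ} (hp : p ∈ addrsAux x k) :
    p ≠ [] := by
  induction x generalizing k with
  | nil => simp [addrsAux] at hp
  | cons c r ih =>
    rw [addrsAux, List.mem_append, List.mem_map] at hp
    rcases hp with ⟨q, -, rfl⟩ | hp
    · exact List.cons_ne_nil _ _
    · exact ih hp

noncomputable section

variable (R : Type*) [CommRing R]

/-- The signed contraction `(-1) ^ W_A • ∂_A t`, where `A` is the vertex of `t` at address `p`. -/
def contractionTerm (t : DTree) (p : List ℕ) : DTree →₀ R :=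
  (-1 : R) ^ weightAt t p • Finsupp.single (contractAt t p) 1

/-- The differential `∂` on trees, with coefficients in an arbitrary commutative ring. -/
def treeBoundary : (DTree →₀ R) →ₗ[R] (DTree →₀ R) :=
  Finsupp.linearCombination R fun t => ((innerAddrs t).map (contractionTerm R t)).sum

theorem treeBoundary_single (t : DTree) :
    treeBoundary R (Finsupp.single t 1) = ((innerAddrs t).map (contractionTerm R t)).sum := by
  rw [treeBoundary, Finsupp.linearCombination_single, one_smul]

/-- The free algebra on trees, encoded as the algebra of the free monoid on `DTree` so that the
forests form a basis. -/
abbrev ForestAlgebra := MonoidAlgebra R (FreeMonoid DTree)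

/-- The basis of forests of the forest algebra. -/
def forestBasis : Module.Basis (List DTree) R (ForestAlgebra R) :=
  (MonoidAlgebra.basis (FreeMonoid DTree) R).reindex FreeMonoid.toList

theorem forestBasis_apply (x : List DTree) :
    forestBasis R x = MonoidAlgebra.single (FreeMonoid.ofList x) 1 := by
  simp [forestBasis]

theorem forestBasis_nil : forestBasis R [] = 1 :=
  forestBasis_apply R []

theorem forestBasis_append (x y : List DTree) :
    forestBasis R (x ++ y) = forestBasis R x * forestBasis R y := by
  simp [forestBasis_apply]

theorem forestBasis_cons (c : DTree) (r : List DTree) :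
    forestBasis R (c :: r) = forestBasis R [c] * forestBasis R r :=
  forestBasis_append R [c] r

/-- The linear map `B` grafting a forest onto a new root. -/
def graft : ForestAlgebra R →ₗ[R] (DTree →₀ R) :=
  (forestBasis R).constr R fun x => Finsupp.single (node x) 1

theorem graft_forestBasis (x : List DTree) :
    graft R (forestBasis R x) = Finsupp.single (node x) 1 :=
  (forestBasis R).constr_basis R _ x

/-- The inclusion of the span of the trees into the forest algebra, as forests with one tree. -/
def treeInclusion : (DTree →₀ R) →ₗ[R] ForestAlgebra R :=
  Finsupp.linearCombination R fun t => forestBasis R [t]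

theorem treeInclusion_single (t : DTree) :
    treeInclusion R (Finsupp.single t 1) = forestBasis R [t] := by
  rw [treeInclusion, Finsupp.linearCombination_single, one_smul]

theorem treeInclusion_graft_forestBasis (x : List DTree) :
    treeInclusion R (graft R (forestBasis R x)) = forestBasis R [node x] := by
  rw [graft_forestBasis, treeInclusion_single]

/-- The sign automorphism `ε` of the forest algebra, `x ↦ (-1) ^ |x| • x` on forests. -/
def parity : ForestAlgebra R →ₐ[R] ForestAlgebra R :=
  MonoidAlgebra.lift R (ForestAlgebra R) (FreeMonoid DTree)
    (FreeMonoid.lift fun t => (-1 : R) ^ deg t • forestBasis R [t])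

theorem parity_tree (t : DTree) :
    parity R (forestBasis R [t]) = (-1 : R) ^ deg t • forestBasis R [t] := by
  simp [parity, forestBasis_apply]

theorem parity_forestBasis (x : List DTree) :
    parity R (forestBasis R x) = (-1 : R) ^ degList x • forestBasis R x := by
  induction x with
  | nil => simp [degList, forestBasis_nil]
  | cons c r ih =>
    rw [forestBasis_cons, map_mul, parity_tree, ih, smul_mul_smul_comm, ← pow_add, degList]

theorem parity_parity (a : ForestAlgebra R) : parity R (parity R a) = a := by
  have h : (parity R).toLinearMap ∘ₗ (parity R).toLinearMap = LinearMap.id :=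
    (forestBasis R).ext fun x => by
      simp [parity_forestBasis, smul_smul, ← mul_pow]
  exact LinearMap.congr_fun h a

theorem parity_treeInclusion_graft (a : ForestAlgebra R) :
    parity R (treeInclusion R (graft R a)) = -treeInclusion R (graft R (parity R a)) := by
  have h : (parity R).toLinearMap ∘ₗ treeInclusion R ∘ₗ graft R
      = -(treeInclusion R ∘ₗ graft R ∘ₗ (parity R).toLinearMap) :=
    (forestBasis R).ext fun x => by
      simp [parity_forestBasis, treeInclusion_graft_forestBasis, degList, deg, pow_add]
  exact LinearMap.congr_fun h a

/-- The value of the derivation `d` on a tree: the signed sum of the contractions of all its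
vertices, where contracting the root leaves the forest of its children. -/
def forestBoundaryTree : DTree → ForestAlgebra R
  | leaf _ => 0
  | node ds => -forestBasis R ds - treeInclusion R (treeBoundary R (Finsupp.single (node ds) 1))

/-- The value of the derivation `d` on a forest, spelled out by the Leibniz rule. -/
def forestBoundaryList : List DTree → ForestAlgebra R
  | [] => 0
  | c :: r => forestBoundaryTree R c * forestBasis R r
      + parity R (forestBasis R [c]) * forestBoundaryList r

/-- The derivation `d` of the forest algebra, twisted by `parity`. -/
def forestBoundary : ForestAlgebra R →ₗ[R] ForestAlgebra R :=
  (forestBasis R).constr R (forestBoundaryList R)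

theorem forestBoundary_forestBasis (x : List DTree) :
    forestBoundary R (forestBasis R x) = forestBoundaryList R x :=
  (forestBasis R).constr_basis R _ x

theorem forestBoundary_one : forestBoundary R 1 = 0 := by
  rw [← forestBasis_nil, forestBoundary_forestBasis, forestBoundaryList]

theorem forestBoundary_tree (t : DTree) :
    forestBoundary R (forestBasis R [t]) = forestBoundaryTree R t := by
  simp [forestBoundary_forestBasis, forestBoundaryList, forestBasis_nil]

theorem forestBoundaryList_append (x y : List DTree) :
    forestBoundaryList R (x ++ y)
      = forestBoundaryList R x * forestBasis R y
        + parity R (forestBasis R x) * forestBoundaryList R y := by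
  induction x with
  | nil => simp [forestBoundaryList, forestBasis_nil]
  | cons c r ih =>
    rw [List.cons_append, forestBoundaryList, forestBoundaryList, ih, forestBasis_append,
      forestBasis_cons R c r, map_mul]
    noncomm_ring

theorem forestBoundary_mul (a b : ForestAlgebra R) :
    forestBoundary R (a * b)
      = forestBoundary R a * b + parity R a * forestBoundary R b := by
  have h : (LinearMap.mul R (ForestAlgebra R)).compr₂ (forestBoundary R)
      = LinearMap.mul R (ForestAlgebra R) ∘ₗ forestBoundary R
        + (LinearMap.mul R (ForestAlgebra R)).compl₁₂ (parity R).toLinearMap (forestBoundary R) :=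
    LinearMap.ext_basis (forestBasis R) (forestBasis R) fun x y => by
      simp [← forestBasis_append, forestBoundary_forestBasis, forestBoundaryList_append]
  exact LinearMap.congr_fun₂ h a b

theorem contractionTerm_root (pre ds r : List DTree) :
    contractionTerm R (node (pre ++ node ds :: r)) [pre.length]
      = (-1 : R) ^ degList pre
          • graft R (forestBasis R pre * -forestBasis R ds * forestBasis R r) := by
  rw [contractionTerm, weightAt_node_append_cons, contractAt_node_append_cons_root, mul_neg,
    neg_mul, ← forestBasis_append, ← forestBasis_append, map_neg, graft_forestBasis]
  simp [weightAt, pow_add]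

theorem contractionTerm_child (pre r : List DTree) (c : DTree) {p : List ℕ} (hp : p ≠ []) :
    contractionTerm R (node (pre ++ c :: r)) (pre.length :: p)
      = (-1 : R) ^ degList pre
          • graft R (forestBasis R pre * -treeInclusion R (contractionTerm R c p)
              * forestBasis R r) := by
  rw [contractionTerm, weightAt_node_append_cons, contractAt_node_append_cons _ _ _ hp,
    contractionTerm, map_smul, treeInclusion_single, mul_neg, neg_mul, mul_smul_comm,
    smul_mul_assoc, ← forestBasis_append, ← forestBasis_append, map_neg, map_smul,
    graft_forestBasis]
  simp [pow_add]

theorem sum_contractionTerm_vertAddrs (pre r : List DTree) (c : DTree) :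
    ((vertAddrs c).map fun p =>
        contractionTerm R (node (pre ++ c :: r)) (pre.length :: p)).sum
      = (-1 : R) ^ degList pre
          • graft R (forestBasis R pre * forestBoundaryTree R c * forestBasis R r) := by
  cases c with
  | leaf a => simp [vertAddrs, forestBoundaryTree]
  | node ds =>
    let insertChild : (DTree →₀ R) →ₗ[R] (DTree →₀ R) := (-1 : R) ^ degList pre •
      graft R ∘ₗ LinearMap.mulRight R (forestBasis R r) ∘ₗ
        LinearMap.mulLeft R (forestBasis R pre) ∘ₗ (-treeInclusion R)
    have inner : ∀ p ∈ addrsAux ds 0,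
        contractionTerm R (node (pre ++ node ds :: r)) (pre.length :: p)
          = insertChild (contractionTerm R (node ds) p) := fun p hp =>
      contractionTerm_child R pre r (node ds) (ne_nil_of_mem_addrsAux hp)
    rw [vertAddrs, List.map_cons, List.sum_cons, List.map_congr_left inner, contractionTerm_root,
      ← Function.comp_def insertChild, ← List.map_map, ← map_list_sum, forestBoundaryTree,
      treeBoundary_single, innerAddrs, sub_eq_add_neg, mul_add, add_mul, map_add, smul_add]
    rfl

theorem sum_contractionTerm_addrsAux (pre x : List DTree) :
    ((addrsAux x pre.length).map (contractionTerm R (node (pre ++ x)))).sum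
      = (-1 : R) ^ degList pre • graft R (forestBasis R pre * forestBoundaryList R x) := by
  induction x generalizing pre with
  | nil => simp [addrsAux, forestBoundaryList]
  | cons c r ih =>
    have tail : ((addrsAux r (pre.length + 1)).map
          (contractionTerm R (node (pre ++ c :: r)))).sum
        = (-1 : R) ^ degList pre • graft R (forestBasis R pre *
            (parity R (forestBasis R [c]) * forestBoundaryList R r)) := by
      simpa [degList_append, degList, pow_add, mul_smul, forestBasis_append, parity_tree,
        mul_assoc] using ih (pre ++ [c])
    rw [addrsAux, List.map_append, List.sum_append, List.map_map, Function.comp_def,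
      sum_contractionTerm_vertAddrs, tail, forestBoundaryList, ← smul_add, ← map_add, mul_add,
      mul_assoc]

theorem treeBoundary_graft (a : ForestAlgebra R) :
    treeBoundary R (graft R a) = graft R (forestBoundary R a) := by
  have h : treeBoundary R ∘ₗ graft R = graft R ∘ₗ forestBoundary R :=
    (forestBasis R).ext fun x => by
      simpa [graft_forestBasis, treeBoundary_single, forestBoundary_forestBasis, forestBasis_nil,
        innerAddrs, degList] using sum_contractionTerm_addrsAux R [] x
  exact LinearMap.congr_fun h a

theorem forestBoundary_treeInclusion_graft (a : ForestAlgebra R) :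
    forestBoundary R (treeInclusion R (graft R a))
      = -a - treeInclusion R (graft R (forestBoundary R a)) := by
  have h : forestBoundary R ∘ₗ treeInclusion R ∘ₗ graft R
      = -LinearMap.id - treeInclusion R ∘ₗ graft R ∘ₗ forestBoundary R :=
    (forestBasis R).ext fun x => by
      simp [← treeBoundary_graft, graft_forestBasis, treeInclusion_single, forestBoundary_tree,
        forestBoundaryTree]
  exact LinearMap.congr_fun h a

theorem forestBoundary_parity_forestBasis (x : List DTree)
    (hx : ∀ c ∈ x, forestBoundary R (parity R (forestBasis R [c]))
      = -parity R (forestBoundary R (forestBasis R [c]))) :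
    forestBoundary R (parity R (forestBasis R x))
      = -parity R (forestBoundary R (forestBasis R x)) := by
  induction x with
  | nil => simp [forestBasis_nil, forestBoundary_one]
  | cons c r ih =>
    rw [List.forall_mem_cons] at hx
    rw [forestBasis_cons, map_mul, forestBoundary_mul, forestBoundary_mul, hx.1, ih hx.2,
      map_add, map_mul, map_mul]
    noncomm_ring

theorem forestBoundary_parity (a : ForestAlgebra R) :
    forestBoundary R (parity R a) = -parity R (forestBoundary R a) := by
  have tree (t : DTree) : forestBoundary R (parity R (forestBasis R [t]))
      = -parity R (forestBoundary R (forestBasis R [t])) := by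
    induction t using induction_on_children with
    | leaf a => simp [parity_tree, forestBoundary_tree, forestBoundaryTree]
    | node ds ih =>
      simp only [← treeInclusion_graft_forestBasis, parity_treeInclusion_graft, map_neg, map_sub,
        forestBoundary_treeInclusion_graft, forestBoundary_parity_forestBasis R ds ih]
  have h : forestBoundary R ∘ₗ (parity R).toLinearMap
      = -((parity R).toLinearMap ∘ₗ forestBoundary R) :=
    (forestBasis R).ext fun x => forestBoundary_parity_forestBasis R x fun c _ => tree c
  exact LinearMap.congr_fun h a

theorem forestBoundary_forestBoundary_mul (a b : ForestAlgebra R) :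
    forestBoundary R (forestBoundary R (a * b))
      = forestBoundary R (forestBoundary R a) * b
        + a * forestBoundary R (forestBoundary R b) := by
  rw [map_map_mul_of_skew_leibniz (forestBoundary R) (parity R) (forestBoundary_mul R)
    (forestBoundary_parity R), parity_parity]

theorem forestBoundary_forestBoundary_forestBasis (x : List DTree)
    (hx : ∀ c ∈ x, forestBoundary R (forestBoundary R (forestBasis R [c])) = 0) :
    forestBoundary R (forestBoundary R (forestBasis R x)) = 0 := by
  induction x with
  | nil => rw [forestBasis_nil, forestBoundary_one, map_zero]
  | cons c r ih =>
    rw [List.forall_mem_cons] at hx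
    rw [forestBasis_cons, forestBoundary_forestBoundary_mul, hx.1, ih hx.2, zero_mul, mul_zero,
      add_zero]

theorem forestBoundary_forestBoundary (a : ForestAlgebra R) :
    forestBoundary R (forestBoundary R a) = 0 := by
  have tree (t : DTree) : forestBoundary R (forestBoundary R (forestBasis R [t])) = 0 := by
    induction t using induction_on_children with
    | leaf a => rw [forestBoundary_tree, forestBoundaryTree, map_zero]
    | node ds ih =>
      simp [← treeInclusion_graft_forestBasis, forestBoundary_treeInclusion_graft,
        forestBoundary_forestBoundary_forestBasis R ds ih]
  have h : forestBoundary R ∘ₗ forestBoundary R = 0 :=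
    (forestBasis R).ext fun x =>
      forestBoundary_forestBoundary_forestBasis R x fun c _ => tree c
  exact LinearMap.congr_fun h a

end

theorem treeDelta_eq_treeBoundary : treeDelta = treeBoundary ℚ :=
  rfl

end DTree

theorem stmt_13_general (R : Type*) [CommRing R] :
    DTree.treeBoundary R ∘ₗ DTree.treeBoundary R = 0 := by
  ext t : 2
  cases t with
  | leaf a => simp [DTree.treeBoundary_single, DTree.innerAddrs]
  | node cs => simp [← DTree.graft_forestBasis, DTree.treeBoundary_graft,
      DTree.forestBoundary_forestBoundary]

/-- Proposition 2.21: the differential `∂` on decorated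
planar rooted trees squares to zero: `∂ (∂ t) = 0` for every decorated tree. -/
theorem stmt_13 (t : DTree) (ht : DTree.Good t) :
    treeDelta (treeDelta (Finsupp.single t (1 : ℚ))) = 0 := by
  rw [DTree.treeDelta_eq_treeBoundary]
  exact LinearMap.congr_fun (stmt_13_general ℚ) _
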